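/- (Pseudogradient convergence, Polyak–Tsypkin) Let J : ℝ^d → ℝ be differentiable, bounded below, with L-Lipschitz gradient. Let (w_t) be a stochastic process with w_{t+1} = w_t − γ_t s_t, where the conditional expectation of s_t given the past satisfies ⟪∇J(w_t), E[s_t | F_t]⟫ ≥ 0, E[‖s_t‖² | F_t] ≤ C for a constant C, γ_t ≥ 0, Σ γ_t = ∞, and Σ γ_t² < ∞. Then J(w_t) converges almost surely, and Σ_t γ_t ⟪∇J(w_t), E[s_t | F_t]⟫ < ∞ almost surely; in particular liminf_t ⟪∇J(w_t), E[s_t | F_t]⟫ = 0 along the subsequence weighted by γ_t. -/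

import Mathlib

open scoped RealInnerProductSpace BigOperators
open MeasureTheory Filter

/-- A nonnegative-drift version of the Robbins–Siegmund theorem: a process that is bounded below and
decreases in conditional mean by `Z t ≥ 0`, up to a summable deterministic error, converges almost
surely, and its total decrease is almost surely finite. -/
theorem ae_tendsto_and_summable_of_condExp_le
    {Ω : Type*} {m : MeasurableSpace Ω} {μ : Measure Ω} [IsProbabilityMeasure μ]
    {ℱ : Filtration ℕ m} {X Z : ℕ → Ω → ℝ} {b : ℕ → ℝ} {a : ℝ}
    (hX : StronglyAdapted ℱ X) (hX_int : ∀ t, Integrable (X t) μ) (hX_ge : ∀ t ω, a ≤ X t ω)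
    (hZ : StronglyAdapted ℱ Z) (hZ_int : ∀ t, Integrable (Z t) μ)
    (hZ_nonneg : ∀ t, ∀ᵐ ω ∂μ, 0 ≤ Z t ω)
    (hb : Summable b) (hb_nonneg : ∀ t, 0 ≤ b t)
    (hstep : ∀ t, ∀ᵐ ω ∂μ, (μ[X (t + 1) | ℱ t]) ω ≤ X t ω - Z t ω + b t) :
    ∀ᵐ ω ∂μ, (∃ l : ℝ, Tendsto (fun t => X t ω) atTop (nhds l)) ∧
      Summable (fun t => Z t ω) := by
  let V : ℕ → Ω → ℝ := fun t ω =>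
    (∑ i ∈ Finset.range t, b i) - ∑ i ∈ Finset.range t, Z i ω - X t ω
  have hV_apply (t : ℕ) (ω : Ω) : V t ω =
      (∑ i ∈ Finset.range t, b i) - ∑ i ∈ Finset.range t, Z i ω - X t ω := rfl
  have hR_meas (t : ℕ) : StronglyMeasurable[ℱ t]
      (fun ω => (∑ i ∈ Finset.range (t + 1), b i) - ∑ i ∈ Finset.range (t + 1), Z i ω) := by
    refine stronglyMeasurable_const.sub (Finset.stronglyMeasurable_fun_sum _ fun i hi => ?_)
    exact (hZ i).mono (ℱ.mono (Nat.lt_succ_iff.mp (Finset.mem_range.mp hi)))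
  have hR_int (t : ℕ) : Integrable
      (fun ω => (∑ i ∈ Finset.range t, b i) - ∑ i ∈ Finset.range t, Z i ω) μ :=
    (integrable_const _).sub (integrable_finsetSum _ fun i _ => hZ_int i)
  have hV_adapted : StronglyAdapted ℱ V := fun t => by
    refine (stronglyMeasurable_const.sub
      (Finset.stronglyMeasurable_fun_sum _ fun i hi => ?_)).sub (hX t)
    exact (hZ i).mono (ℱ.mono (Finset.mem_range.mp hi).le)
  have hV_int (t : ℕ) : Integrable (V t) μ := (hR_int t).sub (hX_int t)
  have hV : Submartingale V ℱ μ := by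
    refine submartingale_nat hV_adapted hV_int fun t => ?_
    have h1 := condExp_sub (hR_int (t + 1)) (hX_int (t + 1)) (ℱ t)
    rw [condExp_of_stronglyMeasurable (ℱ.le t) (hR_meas t) (hR_int (t + 1))] at h1
    filter_upwards [h1, hstep t] with ω h1 h2
    refine le_of_le_of_eq ?_ h1.symm
    rw [hV_apply, Pi.sub_apply, Finset.sum_range_succ, Finset.sum_range_succ]
    linarith
  have hZ_ae : ∀ᵐ ω ∂μ, ∀ t, 0 ≤ Z t ω := ae_all_iff.mpr hZ_nonneg
  set c : ℝ := ∑' i, b i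
  have hb_le (t : ℕ) : ∑ i ∈ Finset.range t, b i ≤ c := hb.sum_le_tsum _ fun i _ => hb_nonneg i
  have hV_le (t : ℕ) : ∀ᵐ ω ∂μ, V t ω ≤ |c - a| := by
    filter_upwards [hZ_ae] with ω hω
    have := Finset.sum_nonneg fun i (_ : i ∈ Finset.range t) => hω i
    rw [hV_apply]
    linarith [hb_le t, hX_ge t ω, le_abs_self (c - a)]
  have hbdd (t : ℕ) : eLpNorm (V t) 1 μ ≤ (2 * |c - a| - ∫ ω, V 0 ω ∂μ).toNNReal := by
    rw [eLpNorm_one_eq_lintegral_enorm, ← ofReal_integral_norm_eq_lintegral_enorm (hV_int t)]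
    refine ENNReal.ofReal_le_ofReal ?_
    have h1 : ∫ ω, V 0 ω ∂μ ≤ ∫ ω, V t ω ∂μ := by
      simpa using hV.setIntegral_le (Nat.zero_le t) MeasurableSet.univ
    have h2 : ∫ ω, ‖V t ω‖ ∂μ ≤ ∫ ω, (2 * |c - a| - V t ω) ∂μ := by
      refine integral_mono_ae (hV_int t).norm ((integrable_const _).sub (hV_int t)) ?_
      filter_upwards [hV_le t] with ω hω
      rw [Real.norm_eq_abs, abs_le']
      constructor <;> linarith [abs_nonneg (c - a)]
    rw [integral_sub (integrable_const _) (hV_int t)] at h2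
    simp only [integral_const, probReal_univ, one_smul] at h2
    linarith
  filter_upwards [hV.exists_ae_tendsto_of_bdd hbdd, hZ_ae] with ω ⟨v, hv⟩ hω
  obtain ⟨B, hB⟩ := hv.bddBelow_range
  have hsum : Summable (fun t => Z t ω) := by
    refine summable_of_sum_range_le (c := c - a - B) hω fun t => ?_
    have h1 : B ≤ V t ω := hB ⟨t, rfl⟩
    rw [hV_apply] at h1
    linarith [hb_le t, hX_ge t ω]
  refine ⟨⟨c - ∑' t, Z t ω - v, ?_⟩, hsum⟩
  refine ((hb.hasSum.tendsto_sum_nat.sub hsum.hasSum.tendsto_sum_nat).sub hv).congr fun t => ?_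
  rw [hV_apply]
  ring

section Gradient

variable {E : Type*} [NormedAddCommGroup E] [InnerProductSpace ℝ E] [CompleteSpace E]
  {J : E → ℝ} {K : ℝ}

/-- Quadratic error of the first-order expansion of a function with Lipschitz gradient. -/
theorem abs_sub_sub_inner_gradient_le (hJ : Differentiable ℝ J) (hK : 0 ≤ K)
    (hLip : ∀ u v, ‖gradient J u - gradient J v‖ ≤ K * ‖u - v‖) (x y : E) :
    |J y - J x - ⟪gradient J x, y - x⟫| ≤ K * ‖y - x‖ ^ 2 := by
  have hbound : ∀ z ∈ Metric.closedBall x ‖y - x‖,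
      ‖fderiv ℝ J z - fderiv ℝ J x‖ ≤ K * ‖y - x‖ := fun z hz => by
    have h := hLip z x
    rw [gradient, gradient, ← map_sub, LinearIsometryEquiv.norm_map] at h
    rw [mem_closedBall_iff_norm] at hz
    exact h.trans (mul_le_mul_of_nonneg_left hz hK)
  have h := (convex_closedBall x ‖y - x‖).norm_image_sub_le_of_norm_fderiv_le'
    (fun z _ => hJ z) hbound (Metric.mem_closedBall_self (norm_nonneg _))
    (mem_closedBall_iff_norm.mpr le_rfl)
  rw [inner_gradient_left]
  simpa [sq, mul_assoc] using h

theorem continuous_gradient_of_lipschitz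
    (hLip : ∀ u v, ‖gradient J u - gradient J v‖ ≤ K * ‖u - v‖) :
    Continuous (gradient J) :=
  (LipschitzWith.of_dist_le' (K := K) fun u v => by
    simpa only [dist_eq_norm] using hLip u v).continuous

end Gradient

section Pseudogradient

variable {E : Type*} [NormedAddCommGroup E] [InnerProductSpace ℝ E]
  {Ω : Type*} {m : MeasurableSpace Ω} {μ : Measure Ω}

theorem MeasureTheory.MemLp.integrable_inner_of_two {f g : Ω → E}
    (hf : MemLp f 2 μ) (hg : MemLp g 2 μ) : Integrable (fun ω => ⟪f ω, g ω⟫) μ :=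
  (hf.norm.integrable_mul hg.norm).mono' (hf.1.inner hg.1)
    (.of_forall fun _ => norm_inner_le_norm _ _)

variable [CompleteSpace E] [IsProbabilityMeasure μ]

/-- Convergence of the pseudogradient method started at a square-integrable point. -/
theorem pseudogradient_convergence_of_memLp {ℱ : Filtration ℕ m} {J : E → ℝ} {K a C : ℝ}
    (hJ : Differentiable ℝ J) (hK : 0 ≤ K) (hC : 0 ≤ C)
    (hLip : ∀ u v, ‖gradient J u - gradient J v‖ ≤ K * ‖u - v‖)
    (hbdd : ∀ u, a ≤ J u) {γ : ℕ → ℝ} (hγ_nonneg : ∀ t, 0 ≤ γ t)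
    (hγ_sq : Summable (fun t => γ t ^ 2)) {w s : ℕ → Ω → E}
    (hw : StronglyAdapted ℱ w) (hw_zero : MemLp (w 0) 2 μ) (hs : ∀ t, MemLp (s t) 2 μ)
    (hupdate : ∀ t ω, w (t + 1) ω = w t ω - γ t • s t ω)
    (hpseudo : ∀ t, ∀ᵐ ω ∂μ, 0 ≤ ⟪gradient J (w t ω), (μ[s t | ℱ t]) ω⟫)
    (hmoment : ∀ t, ∀ᵐ ω ∂μ, (μ[fun ω => ‖s t ω‖ ^ 2 | ℱ t]) ω ≤ C) :
    ∀ᵐ ω ∂μ, (∃ l : ℝ, Tendsto (fun t => J (w t ω)) atTop (nhds l)) ∧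
      Summable (fun t => γ t * ⟪gradient J (w t ω), (μ[s t | ℱ t]) ω⟫) := by
  have hgrad := continuous_gradient_of_lipschitz hLip
  have hw_memLp (t : ℕ) : MemLp (w t) 2 μ := by
    induction t with
    | zero => exact hw_zero
    | succ t ih => exact (funext (hupdate t) : w (t + 1) = _) ▸ ih.sub ((hs t).const_smul (γ t))
  have hg_meas (t : ℕ) : StronglyMeasurable[ℱ t] (fun ω => gradient J (w t ω)) :=
    hgrad.comp_stronglyMeasurable (hw t)
  have hg_memLp (t : ℕ) : MemLp (fun ω => gradient J (w t ω)) 2 μ := by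
    refine ((memLp_const ‖gradient J 0‖).add ((hw_memLp t).norm.const_mul K)).mono'
      (hgrad.comp_aestronglyMeasurable (hw_memLp t).1) (.of_forall fun ω => ?_)
    have h := norm_sub_norm_le (gradient J (w t ω)) (gradient J 0)
    have h' := hLip (w t ω) 0
    rw [sub_zero] at h'
    simp only [Pi.add_apply]
    linarith
  have hX_int (t : ℕ) : Integrable (fun ω => J (w t ω)) μ := by
    have hsq := (hw_memLp t).integrable_norm_pow two_ne_zero
    refine (((integrable_const |J 0|).add
      (((memLp_const (gradient J 0)).integrable_inner_of_two (hw_memLp t)).norm)).add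
      (hsq.const_mul K)).mono' (hJ.continuous.comp_aestronglyMeasurable (hw_memLp t).1)
      (.of_forall fun ω => ?_)
    have h := abs_sub_sub_inner_gradient_le hJ hK hLip 0 (w t ω)
    rw [sub_zero] at h
    simp only [Pi.add_apply, Real.norm_eq_abs]
    have h1 := abs_add_le (J 0) ⟪gradient J 0, w t ω⟫
    have h2 := abs_sub_abs_le_abs_sub (J (w t ω)) (J 0 + ⟪gradient J 0, w t ω⟫)
    rw [← sub_sub] at h2
    linarith
  have hinner_int (t : ℕ) : Integrable (fun ω => ⟪gradient J (w t ω), s t ω⟫) μ :=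
    (hg_memLp t).integrable_inner_of_two (hs t)
  have hs_int (t : ℕ) : Integrable (s t) μ := (hs t).integrable one_le_two
  have hs_sq (t : ℕ) : Integrable (fun ω => ‖s t ω‖ ^ 2) μ :=
    (hs t).integrable_norm_pow two_ne_zero
  have hpull (t : ℕ) : μ[fun ω => ⟪gradient J (w t ω), s t ω⟫ | ℱ t] =ᵐ[μ]
      fun ω => ⟪gradient J (w t ω), (μ[s t | ℱ t]) ω⟫ :=
    condExp_bilin_of_stronglyMeasurable_left (innerSL ℝ) (hg_meas t) (hinner_int t) (hs_int t)
  refine ae_tendsto_and_summable_of_condExp_le (ℱ := ℱ) (X := fun t ω => J (w t ω))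
    (b := fun t => K * C * γ t ^ 2) (fun t => hJ.continuous.comp_stronglyMeasurable (hw t)) hX_int
    (fun t ω => hbdd _) (fun t => ((hg_meas t).inner stronglyMeasurable_condExp).const_mul (γ t))
    (fun t => (integrable_condExp.congr (hpull t)).const_mul (γ t)) (fun t => ?_)
    (hγ_sq.mul_left _) (fun t => by positivity) (fun t => ?_)
  · filter_upwards [hpseudo t] with ω hω using mul_nonneg (hγ_nonneg t) hω
  · let A : Ω → ℝ := fun ω => J (w t ω)
    let D : Ω → ℝ := γ t • fun ω => ⟪gradient J (w t ω), s t ω⟫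
    let S : Ω → ℝ := (K * γ t ^ 2) • fun ω => ‖s t ω‖ ^ 2
    have hD : Integrable D μ := (hinner_int t).smul (γ t)
    have hS : Integrable S μ := (hs_sq t).smul (K * γ t ^ 2)
    have hle : (fun ω => J (w (t + 1) ω)) ≤ᵐ[μ] A - D + S := .of_forall fun ω => by
      have h := (abs_le.mp (abs_sub_sub_inner_gradient_le hJ hK hLip (w t ω) (w (t + 1) ω))).2
      have hstep : w (t + 1) ω - w t ω = -(γ t • s t ω) := by rw [hupdate]; abel
      rw [hstep, inner_neg_right, norm_neg, norm_smul, inner_smul_right, mul_pow,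
        Real.norm_eq_abs, sq_abs] at h
      simp only [A, D, S, Pi.add_apply, Pi.sub_apply, Pi.smul_apply, smul_eq_mul]
      linarith
    have hA : μ[A | ℱ t] = A := condExp_of_stronglyMeasurable (ℱ.le t)
      (hJ.continuous.comp_stronglyMeasurable (hw t)) (hX_int t)
    filter_upwards [condExp_mono (m := ℱ t) (hX_int (t + 1)) (((hX_int t).sub hD).add hS) hle,
      condExp_add ((hX_int t).sub hD) hS (ℱ t), condExp_sub (hX_int t) hD (ℱ t),
      condExp_smul (μ := μ) (γ t) (fun ω => ⟪gradient J (w t ω), s t ω⟫) (ℱ t),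
      condExp_smul (μ := μ) (K * γ t ^ 2) (fun ω => ‖s t ω‖ ^ 2) (ℱ t), hpull t, hmoment t]
      with ω h1 h2 h3 h4 h5 h6 h7
    refine h1.trans ?_
    have h8 : K * γ t ^ 2 * (μ[fun ω => ‖s t ω‖ ^ 2 | ℱ t]) ω ≤ K * γ t ^ 2 * C :=
      mul_le_mul_of_nonneg_left h7 (by positivity)
    change (μ[A - D + S | ℱ t]) ω = (μ[A - D | ℱ t]) ω + (μ[S | ℱ t]) ω at h2
    change (μ[A - D | ℱ t]) ω = (μ[A | ℱ t]) ω - (μ[D | ℱ t]) ω at h3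
    change (μ[D | ℱ t]) ω = γ t * _ at h4
    change (μ[S | ℱ t]) ω = K * γ t ^ 2 * _ at h5
    rw [h2, h3, h4, h5, h6, hA]
    simp only [A]
    linarith

end Pseudogradient

/-- Polyak–Tsypkin pseudogradient convergence theorem. -/
theorem pseudogradient_convergence
    {d : ℕ} {Ω : Type*} {m : MeasurableSpace Ω}
    (μ : Measure Ω) [IsProbabilityMeasure μ]
    (ℱ : Filtration ℕ m)
    (J : EuclideanSpace ℝ (Fin d) → ℝ) (L Jmin C : ℝ)
    (hJ : Differentiable ℝ J)
    (hLip : ∀ u v, ‖gradient J u - gradient J v‖ ≤ L * ‖u - v‖)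
    (hbdd : ∀ u, Jmin ≤ J u)
    (γ : ℕ → ℝ) (hγ_nonneg : ∀ t, 0 ≤ γ t)
    (hγ_div : ¬ Summable γ)
    (hγ_sq : Summable (fun t => γ t ^ 2))
    (w s : ℕ → Ω → EuclideanSpace ℝ (Fin d))
    (hw_adapted : Adapted ℱ w)
    (hs_meas : ∀ t, StronglyMeasurable[ℱ (t + 1)] (s t))
    (hs_int : ∀ t, Integrable (s t) μ)
    (hs_sq_int : ∀ t, Integrable (fun ω => ‖s t ω‖ ^ 2) μ)
    (hupdate : ∀ t ω, w (t + 1) ω = w t ω - γ t • s t ω)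
    (hpseudo : ∀ t, ∀ᵐ ω ∂μ,
      0 ≤ ⟪gradient J (w t ω), (μ[s t | ℱ t]) ω⟫)
    (hmoment : ∀ t, ∀ᵐ ω ∂μ,
      (μ[fun ω => ‖s t ω‖ ^ 2 | ℱ t]) ω ≤ C) :
    (∀ᵐ ω ∂μ, ∃ l : ℝ,
        Tendsto (fun t => J (w t ω)) atTop (nhds l)) ∧
      (∀ᵐ ω ∂μ, Summable (fun t =>
          γ t * ⟪gradient J (w t ω), (μ[s t | ℱ t]) ω⟫)) := by
  have hs_memLp (t : ℕ) : MemLp (s t) 2 μ :=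
    (memLp_two_iff_integrable_sq_norm (hs_int t).1).mpr (hs_sq_int t)
  have hw (t : ℕ) : StronglyMeasurable[ℱ t] (w t) := (hw_adapted t).stronglyMeasurable
  have hLip' (u v) : ‖gradient J u - gradient J v‖ ≤ |L| * ‖u - v‖ :=
    (hLip u v).trans (mul_le_mul_of_nonneg_right (le_abs_self L) (norm_nonneg _))
  let B : ℕ → Set Ω := fun k => {ω | ‖w 0 ω‖ ≤ k}
  have hB (k t : ℕ) : MeasurableSet[ℱ t] (B k) :=
    ℱ.mono (Nat.zero_le t) _ ((hw 0).norm.measurable measurableSet_Iic)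
  have hcond (k t : ℕ) := condExp_indicator (hs_int t) (hB k t)
  have key (k : ℕ) := pseudogradient_convergence_of_memLp (μ := μ) (ℱ := ℱ) (C := max C 0)
    (w := fun t => (B k).indicator (w t)) (s := fun t => (B k).indicator (s t))
    hJ (abs_nonneg L) (le_max_right _ _) hLip' hbdd hγ_nonneg hγ_sq
    (fun t => (hw t).indicator (hB k t))
    (MemLp.of_bound (((hw 0).mono (ℱ.le 0)).aestronglyMeasurable.indicator (ℱ.le 0 _ (hB k 0))) k
      (.of_forall fun ω => by
        by_cases h : ω ∈ B k
        · rw [Set.indicator_of_mem h]; exact h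
        · rw [Set.indicator_of_notMem h, norm_zero]; positivity))
    (fun t => (hs_memLp t).indicator (ℱ.le t _ (hB k t)))
    (fun t ω => by by_cases h : ω ∈ B k <;> simp [h, hupdate])
    (fun t => by
      filter_upwards [hcond k t, hpseudo t] with ω h1 h2
      rw [h1]
      by_cases h : ω ∈ B k
      · simpa [h] using h2
      · simp [h])
    (fun t => by
      have hsq : (fun ω => ‖(B k).indicator (s t) ω‖ ^ 2) =
          (B k).indicator (fun ω => ‖s t ω‖ ^ 2) := by
        ext ω; by_cases h : ω ∈ B k <;> simp [h]
      rw [hsq]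
      filter_upwards [condExp_indicator (hs_sq_int t) (hB k t), hmoment t] with ω h1 h2
      rw [h1]
      by_cases h : ω ∈ B k
      · rw [Set.indicator_of_mem h]; exact h2.trans (le_max_left _ _)
      · rw [Set.indicator_of_notMem h]; exact le_max_right _ _)
  rw [← eventually_and]
  filter_upwards [ae_all_iff.mpr key, ae_all_iff.mpr fun k => ae_all_iff.mpr (hcond k)]
    with ω h1 h2
  obtain ⟨k, hk⟩ := exists_nat_ge ‖w 0 ω‖
  have hω : ω ∈ B k := hk
  simpa only [h2, Set.indicator_of_mem hω] using h1 k
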